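/- Let p ∈ [1, ∞), let F : 𝕋 → ℂ be absolutely continuous with Ḟ ∈ L^p(𝕋), and let f = P[F] be its Poisson integral. Then for every r ∈ (0, 1), (1/(2π)) ∫₀^{2π} |f_z(re^{iθ})|^p dθ ≤ ‖Ḟ‖_{L^p(𝕋)}^p · ((1/(2π)) ∫₀^{2π} dt / |1 − r e^{−it}|)^p. -/

import Mathlib

open MeasureTheory Complex Metric Set Filter
open scoped Real Topology ENNReal

noncomputable section

/-- The Poisson kernel `P(z) = (1-|z|^2)/|1-z|^2`. -/
def poissonKer (z : ℂ) : ℝ := (1 - ‖z‖ ^ 2) / ‖1 - z‖ ^ 2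

/-- The Poisson integral of a boundary function `F` defined on the unit circle. -/
def poissonInt (F : ℂ → ℂ) (z : ℂ) : ℂ :=
  (1 / (2 * π)) * ∫ t in (0:ℝ)..(2 * π),
    (poissonKer (z * Complex.exp (-(t : ℂ) * Complex.I)) : ℂ) *
      F (Complex.exp ((t : ℂ) * Complex.I))

/-- The Poisson integral of a (2π-periodic) function of the angular variable. -/
def poissonIntR (φ : ℝ → ℂ) (z : ℂ) : ℂ :=
  (1 / (2 * π)) * ∫ t in (0:ℝ)..(2 * π),
    (poissonKer (z * Complex.exp (-(t : ℂ) * Complex.I)) : ℂ) * φ t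

/-- The conjugate Poisson kernel `P̃(z) = Im((1+z)/(1-z))`. -/
def conjPoissonKer (z : ℂ) : ℝ := ((1 + z) / (1 - z)).im

/-- The conjugate Poisson integral of a function of the angular variable. -/
def conjPoissonIntR (φ : ℝ → ℂ) (z : ℂ) : ℂ :=
  (1 / (2 * π)) * ∫ t in (0:ℝ)..(2 * π),
    (conjPoissonKer (z * Complex.exp (-(t : ℂ) * Complex.I)) : ℂ) * φ t

/-- Wirtinger derivative `f_z = (1/2)(∂ₓ - i ∂_y) f`. -/
def wdz (f : ℂ → ℂ) (z : ℂ) : ℂ :=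
  (1 / 2) * (fderiv ℝ f z 1 - Complex.I * fderiv ℝ f z Complex.I)

/-- Wirtinger derivative `f_z̄ = (1/2)(∂ₓ + i ∂_y) f`. -/
def wdzb (f : ℂ → ℂ) (z : ℂ) : ℂ :=
  (1 / 2) * (fderiv ℝ f z 1 + Complex.I * fderiv ℝ f z Complex.I)

/-- The angular derivative `f_θ(z) = i (z f_z(z) - z̄ f_z̄(z))`. -/
def fTheta (f : ℂ → ℂ) (z : ℂ) : ℂ :=
  Complex.I * (z * wdz f z - (starRingEnd ℂ) z * wdzb f z)

/-- The radial derivative multiplied by `r`: `r f_r(z) = z f_z(z) + z̄ f_z̄(z)`. -/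
def rFr (f : ℂ → ℂ) (z : ℂ) : ℂ :=
  z * wdz f z + (starRingEnd ℂ) z * wdzb f z

/-- `F : 𝕋 → ℂ` is absolutely continuous with angular derivative `Ḟ = Fd`,
i.e. `t ↦ F(e^{it})` is an indefinite integral of the (locally integrable,
2π-periodic) function `Fd`. -/
def IsACDeriv (F : ℂ → ℂ) (Fd : ℝ → ℂ) : Prop :=
  (∀ a b : ℝ, IntervalIntegrable Fd MeasureTheory.volume a b) ∧
  Function.Periodic Fd (2 * π) ∧
  ∀ t : ℝ, F (Complex.exp ((t : ℂ) * Complex.I)) = F 1 + ∫ s in (0:ℝ)..t, Fd s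

/-- membership in `L^p(𝕋)`, identifying `𝕋` with `[0, 2π)`. -/
def MemLpT (p : ℝ≥0∞) (φ : ℝ → ℂ) : Prop :=
  MeasureTheory.MemLp φ p (MeasureTheory.volume.restrict (Ioc (0:ℝ) (2 * π)))

/-- The integral mean `M_p(r, g)`. -/
def Mp (p : ℝ) (g : ℂ → ℂ) (r : ℝ) : ℝ :=
  ((1 / (2 * π)) * ∫ θ in (0:ℝ)..(2 * π),
      ‖g ((r : ℂ) * Complex.exp ((θ : ℂ) * Complex.I))‖ ^ p) ^ (1 / p)

/-- The `L^p(𝕋)` norm `((1/2π) ∫ |φ|^p)^{1/p}`. -/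
def lpNormT (p : ℝ) (φ : ℝ → ℂ) : ℝ :=
  ((1 / (2 * π)) * ∫ t in (0:ℝ)..(2 * π), ‖φ t‖ ^ p) ^ (1 / p)

/-- Membership in the analytic Hardy space `H^p(𝔻)` for `p ∈ [1, ∞)`. -/
def MemHp (p : ℝ) (g : ℂ → ℂ) : Prop :=
  DifferentiableOn ℂ g (ball (0:ℂ) 1) ∧ ∃ M : ℝ, ∀ r ∈ Ioo (0:ℝ) 1, Mp p g r ≤ M

/-- Membership in `H^∞(𝔻)`: bounded analytic functions on the unit disk. -/
def MemHinf (g : ℂ → ℂ) : Prop :=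
  DifferentiableOn ℂ g (ball (0:ℂ) 1) ∧ ∃ M : ℝ, ∀ z ∈ ball (0:ℂ) 1, ‖g z‖ ≤ M

/-- Harmonicity on the unit disk: `f` is C² with vanishing Laplacian. -/
def HarmonicOnD (f : ℂ → ℂ) : Prop :=
  ContDiffOn ℝ 2 f (ball (0:ℂ) 1) ∧
  ∀ z ∈ ball (0:ℂ) 1,
    fderiv ℝ (fun w => fderiv ℝ f w 1) z 1
      + fderiv ℝ (fun w => fderiv ℝ f w Complex.I) z Complex.I = 0

/-- Membership in the harmonic Hardy space `h^p(𝔻)` for `p ∈ [1, ∞)`. -/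
def Memhp (p : ℝ) (g : ℂ → ℂ) : Prop :=
  HarmonicOnD g ∧ ∃ M : ℝ, ∀ r ∈ Ioo (0:ℝ) 1, Mp p g r ≤ M

/-- Membership in `h^∞(𝔻)`: bounded harmonic functions on the unit disk. -/
def Memhinf (g : ℂ → ℂ) : Prop :=
  HarmonicOnD g ∧ ∃ M : ℝ, ∀ z ∈ ball (0:ℂ) 1, ‖g z‖ ≤ M

/-- `L` is the value of the principal-value Hilbert transform
`(1/2π) p.v. ∫ φ(t)/tan((θ-t)/2) dt` of (the 2π-periodic) `φ` at `θ`. -/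
def IsPVHilbert (φ : ℝ → ℂ) (θ : ℝ) (L : ℂ) : Prop :=
  Filter.Tendsto
    (fun ε : ℝ => (1 / (2 * π)) *
      ∫ t in Ioo (θ - π) (θ + π) \ Ioo (θ - ε) (θ + ε),
        φ t / (Real.tan ((θ - t) / 2) : ℂ))
    (nhdsWithin 0 (Ioi 0)) (nhds L)

lemma aux_ibp (H H' Fd : ℝ → ℂ) (T : ℝ) (hT : 0 ≤ T) (hH : ∀ t, HasDerivAt H (H' t) t)
    (hc : Continuous H') (hFd : IntervalIntegrable Fd volume 0 T) :
    ∫ t in (0:ℝ)..T, H' t * ∫ s in (0:ℝ)..t, Fd s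
      = H T * (∫ s in (0:ℝ)..T, Fd s) - ∫ s in (0:ℝ)..T, H s * Fd s := by
  have hFi : Integrable Fd (volume.restrict (Ioc 0 T)) :=
    (intervalIntegrable_iff_integrableOn_Ioc_of_le hT).1 hFd
  have hHi : Integrable H' (volume.restrict (Ioc 0 T)) :=
    (intervalIntegrable_iff_integrableOn_Ioc_of_le hT).1 (hc.intervalIntegrable _ _)
  have hHc : Continuous H := continuous_iff_continuousAt.2 fun t => (hH t).continuousAt
  have hm : MeasurableSet {q : ℝ × ℝ | q.2 ≤ q.1} :=
    measurableSet_le measurable_snd measurable_fst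
  have hint := (hHi.mul_prod hFi).indicator hm
  have hsw := integral_integral_swap
    (f := fun t s => ({q : ℝ × ℝ | q.2 ≤ q.1}).indicator (fun q => H' q.1 * Fd q.2) (t, s)) hint
  have h1 : ∀ t ∈ Ioc 0 T, (∫ s in Ioc 0 T, ({q : ℝ × ℝ | q.2 ≤ q.1}).indicator
      (fun q => H' q.1 * Fd q.2) (t, s)) = H' t * ∫ s in (0:ℝ)..t, Fd s := by
    intro t ht
    have e : (fun s => ({q : ℝ × ℝ | q.2 ≤ q.1}).indicator (fun q => H' q.1 * Fd q.2) (t, s))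
        = (Iic t).indicator (fun s => H' t * Fd s) := by
      ext s; simp [indicator]
    rw [e, setIntegral_indicator measurableSet_Iic, Ioc_inter_Iic, min_eq_right ht.2,
      integral_const_mul, intervalIntegral.integral_of_le ht.1.le]
  have h2 : ∀ s ∈ Ioc 0 T, (∫ t in Ioc 0 T, ({q : ℝ × ℝ | q.2 ≤ q.1}).indicator
      (fun q => H' q.1 * Fd q.2) (t, s)) = H T * Fd s - H s * Fd s := by
    intro s hs
    have e : (fun t => ({q : ℝ × ℝ | q.2 ≤ q.1}).indicator (fun q => H' q.1 * Fd q.2) (t, s))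
        = (Ici s).indicator (fun t => H' t * Fd s) := by
      ext t; simp [indicator]
    have e2 : Ioc 0 T ∩ Ici s = Icc s T := by
      ext x; simp only [mem_inter_iff, mem_Ioc, mem_Ici, mem_Icc]
      constructor
      · rintro ⟨⟨_, b⟩, c⟩; exact ⟨c, b⟩
      · rintro ⟨a, b⟩; exact ⟨⟨hs.1.trans_le a, b⟩, a⟩
    rw [e, setIntegral_indicator measurableSet_Ici, e2, integral_Icc_eq_integral_Ioc,
      integral_mul_const, ← intervalIntegral.integral_of_le hs.2,
      intervalIntegral.integral_eq_sub_of_hasDerivAt (fun x _ => hH x) (hc.intervalIntegrable _ _)]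
    ring
  rw [setIntegral_congr_fun measurableSet_Ioc h1, setIntegral_congr_fun measurableSet_Ioc h2] at hsw
  rw [intervalIntegral.integral_of_le hT, hsw, ← intervalIntegral.integral_of_le hT,
    intervalIntegral.integral_sub (hFd.const_mul _), intervalIntegral.integral_const_mul]
  exact hFd.continuousOn_mul hHc.continuousOn

lemma aux_norm_e (t : ℝ) : ‖Complex.exp (-(t : ℂ) * Complex.I)‖ = 1 := by
  rw [← Complex.ofReal_neg, Complex.norm_exp_ofReal_mul_I]

lemma aux_lb (w : ℂ) (t : ℝ) : 1 - ‖w‖ ≤ ‖1 - w * Complex.exp (-(t : ℂ) * Complex.I)‖ := by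
  have := norm_sub_norm_le (1:ℂ) (w * Complex.exp (-(t : ℂ) * Complex.I))
  rwa [norm_mul, aux_norm_e, mul_one, norm_one] at this

lemma aux_ne {w : ℂ} (hw : ‖w‖ < 1) (t : ℝ) :
    1 - w * Complex.exp (-(t : ℂ) * Complex.I) ≠ 0 := by
  rw [← norm_pos_iff]; linarith [aux_lb w t]

lemma aux_deriv (φ : ℝ → ℂ) (hφ : Continuous φ) {z : ℂ} (hz : ‖z‖ < 1) :
    HasDerivAt (fun w => ∫ t in (0:ℝ)..(2 * π), (1 - w * Complex.exp (-(t : ℂ) * Complex.I))⁻¹ * φ t)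
      (∫ t in (0:ℝ)..(2 * π), Complex.exp (-(t : ℂ) * Complex.I) /
        (1 - z * Complex.exp (-(t : ℂ) * Complex.I)) ^ 2 * φ t) z := by
  have hε : 0 < (1 - ‖z‖) / 2 := by linarith
  have hb : ∀ w ∈ ball z ((1 - ‖z‖) / 2), ‖w‖ ≤ 1 - (1 - ‖z‖) / 2 := by
    intro w hw
    rw [mem_ball, dist_eq_norm] at hw
    have := norm_sub_norm_le w z
    linarith
  have hcE : Continuous fun t : ℝ => Complex.exp (-(t : ℂ) * Complex.I) := by fun_prop
  refine (intervalIntegral.hasDerivAt_integral_of_dominated_loc_of_deriv_le (𝕜 := ℂ)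
    (F' := fun w t => Complex.exp (-(t : ℂ) * Complex.I) /
        (1 - w * Complex.exp (-(t : ℂ) * Complex.I)) ^ 2 * φ t)
    (bound := fun t => 1 / ((1 - ‖z‖) / 2) ^ 2 * ‖φ t‖)
    (ball_mem_nhds z hε) ?_ ?_ ?_ ?_ ?_ ?_).2
  · filter_upwards [ball_mem_nhds z hε] with w hw
    have hw1 : ‖w‖ < 1 := by linarith [hb w hw]
    have : Continuous fun t : ℝ => (1 - w * Complex.exp (-(t : ℂ) * Complex.I))⁻¹ * φ t :=
      ((continuous_const.sub (continuous_const.mul hcE)).inv₀ (aux_ne hw1)).mul hφ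
    exact this.aestronglyMeasurable
  · exact (((continuous_const.sub (continuous_const.mul hcE)).inv₀ (aux_ne hz)).mul
      hφ).intervalIntegrable _ _
  · have : Continuous fun t : ℝ => Complex.exp (-(t : ℂ) * Complex.I) /
        (1 - z * Complex.exp (-(t : ℂ) * Complex.I)) ^ 2 * φ t :=
      (hcE.div ((continuous_const.sub (continuous_const.mul hcE)).pow 2)
        (fun t => pow_ne_zero 2 (aux_ne hz t))).mul hφ
    exact this.aestronglyMeasurable
  · refine Eventually.of_forall fun t _ w hw => ?_
    rw [norm_mul, norm_div, aux_norm_e, norm_pow]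
    have h1 : (1 - ‖z‖) / 2 ≤ ‖1 - w * Complex.exp (-(t : ℂ) * Complex.I)‖ := by
      linarith [hb w hw, aux_lb w t]
    gcongr
  · exact (continuous_const.mul hφ.norm).intervalIntegrable _ _
  · refine Eventually.of_forall fun t _ w hw => ?_
    have hw1 : ‖w‖ < 1 := by linarith [hb w hw]
    have h1 : HasDerivAt (fun w : ℂ => 1 - w * Complex.exp (-(t : ℂ) * Complex.I))
        (-(1 * Complex.exp (-(t : ℂ) * Complex.I))) w :=
      ((hasDerivAt_id w).mul_const _).const_sub 1
    have h2 := (h1.fun_inv (aux_ne hw1 t)).mul_const (φ t)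
    refine h2.congr_deriv ?_
    ring

lemma aux_P (w : ℂ) (hw : 1 - w ≠ 0) :
    (poissonKer w : ℂ) = (1 - w)⁻¹ + (starRingEnd ℂ) (1 - w)⁻¹ - 1 := by
  have h2 : (starRingEnd ℂ) (1 - w) ≠ 0 := (map_ne_zero _).2 hw
  unfold poissonKer
  push_cast
  rw [← Complex.mul_conj', ← Complex.mul_conj', map_inv₀]
  field_simp
  simp only [map_sub, map_one]
  ring

lemma aux_wdz (f A B : ℂ → ℂ) (C a b z : ℂ) (hA : HasDerivAt A a z) (hB : HasDerivAt B b z)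
    (hf : f =ᶠ[𝓝 z] fun w => A w + (starRingEnd ℂ) (B w) - C) : wdz f z = a := by
  have h1 : HasFDerivAt A _ z := hA.hasFDerivAt.restrictScalars ℝ
  have h2 : HasFDerivAt B _ z := hB.hasFDerivAt.restrictScalars ℝ
  have h3 : HasFDerivAt (fun w => (starRingEnd ℂ) (B w)) _ z :=
    (Complex.conjCLE : ℂ →L[ℝ] ℂ).hasFDerivAt.comp z h2
  have h4 := ((h1.add h3).sub_const C).congr_of_eventuallyEq hf
  unfold wdz
  rw [h4.fderiv]
  simp
  linear_combination (-a/2 + (starRingEnd ℂ) b/2) * Complex.I_sq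

lemma aux_fz (F : ℂ → ℂ) (Fd : ℝ → ℂ) (hF : IsACDeriv F Fd) {z : ℂ} (hz : ‖z‖ < 1) :
    wdz (poissonInt F) z = (1 / (2 * π)) * ∫ t in (0:ℝ)..(2 * π),
      -Complex.I * (Complex.exp (-(t : ℂ) * Complex.I) /
        (1 - z * Complex.exp (-(t : ℂ) * Complex.I)) * Fd t) := by
  obtain ⟨hi, hper, hFT⟩ := hF
  have hcE : Continuous fun t : ℝ => Complex.exp (-(t : ℂ) * Complex.I) := by fun_prop
  have hφ : Continuous fun t : ℝ => F (Complex.exp ((t : ℂ) * Complex.I)) := by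
    simp_rw [hFT]
    exact continuous_const.add (intervalIntegral.continuous_primitive hi 0)
  have hA := (aux_deriv _ hφ hz).const_mul (1 / (2 * (π : ℂ)))
  have hB := (aux_deriv _ (Complex.continuous_conj.comp hφ) hz).const_mul (1 / (2 * (π : ℂ)))
  rw [aux_wdz (poissonInt F) _ _ (1 / (2 * π) * ∫ t in (0:ℝ)..(2 * π),
    F (Complex.exp ((t : ℂ) * Complex.I))) _ _ z hA hB]
  · congr 1
    have hH : ∀ t : ℝ, HasDerivAt (fun t : ℝ => Complex.exp (-(t : ℂ) * Complex.I) /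
        (1 - z * Complex.exp (-(t : ℂ) * Complex.I)))
        (-Complex.I * (Complex.exp (-(t : ℂ) * Complex.I) /
        (1 - z * Complex.exp (-(t : ℂ) * Complex.I)) ^ 2)) t := by
      intro t
      have h0 : HasDerivAt (fun t : ℝ => Complex.exp (-(t : ℂ) * Complex.I))
          (Complex.exp (-(t : ℂ) * Complex.I) * (-1 * Complex.I)) t :=
        (((Complex.ofRealCLM.hasDerivAt (x := t)).neg).mul_const Complex.I).cexp
      have h1 := h0.div ((h0.const_mul z).const_sub 1) (aux_ne hz t)
      refine h1.congr_deriv ?_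
      have := aux_ne hz t
      rw [mul_div_assoc', div_left_inj' (pow_ne_zero 2 this)]
      ring
    have hc : Continuous fun t : ℝ => -Complex.I * (Complex.exp (-(t : ℂ) * Complex.I) /
        (1 - z * Complex.exp (-(t : ℂ) * Complex.I)) ^ 2) :=
      continuous_const.mul (hcE.div ((continuous_const.sub (continuous_const.mul hcE)).pow 2)
        (fun t => pow_ne_zero 2 (aux_ne hz t)))
    have hT : (0:ℝ) ≤ 2 * π := by positivity
    have hibp := aux_ibp _ _ Fd (2 * π) hT hH hc (hi _ _)
    have hzero : ∫ s in (0:ℝ)..(2 * π), Fd s = 0 := by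
      have := hFT (2 * π)
      push_cast at this
      rw [Complex.exp_two_pi_mul_I] at this
      simpa using this
    have hfull := intervalIntegral.integral_eq_sub_of_hasDerivAt (a := 0) (b := 2 * π)
      (fun x _ => hH x) (hc.intervalIntegrable _ _)
    have hexp : Complex.exp (-((2 * π : ℝ) : ℂ) * Complex.I) = 1 := by
      push_cast
      rw [neg_mul, Complex.exp_neg, Complex.exp_two_pi_mul_I, inv_one]
    rw [hexp] at hfull
    simp only [Complex.ofReal_zero, neg_zero, zero_mul, Complex.exp_zero, sub_self] at hfull
    rw [hzero, mul_zero, zero_sub] at hibp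
    rw [intervalIntegral.integral_const_mul, neg_mul, ← mul_neg, ← hibp,
      ← intervalIntegral.integral_const_mul]
    have : ∀ t : ℝ, Complex.exp (-(t : ℂ) * Complex.I) /
        (1 - z * Complex.exp (-(t : ℂ) * Complex.I)) ^ 2 * F (Complex.exp ((t : ℂ) * Complex.I))
        = (-Complex.I * (Complex.exp (-(t : ℂ) * Complex.I) /
        (1 - z * Complex.exp (-(t : ℂ) * Complex.I)) ^ 2)) * (Complex.I * F 1) +
        Complex.I * (-Complex.I * (Complex.exp (-(t : ℂ) * Complex.I) /
        (1 - z * Complex.exp (-(t : ℂ) * Complex.I)) ^ 2) * ∫ s in (0:ℝ)..t, Fd s) := by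
      intro t
      rw [hFT]
      generalize Complex.exp (-(t : ℂ) * Complex.I) /
        (1 - z * Complex.exp (-(t : ℂ) * Complex.I)) ^ 2 = X
      linear_combination (X * F 1 + X * ∫ s in (0:ℝ)..t, Fd s) * Complex.I_sq
    simp_rw [this]
    rw [intervalIntegral.integral_add, intervalIntegral.integral_mul_const, hfull, zero_mul,
      zero_add]
    · exact (hc.mul continuous_const).intervalIntegrable _ _
    · exact (continuous_const.mul (hc.mul
        (intervalIntegral.continuous_primitive hi 0))).intervalIntegrable _ _
  · filter_upwards [isOpen_ball.mem_nhds (show z ∈ ball (0:ℂ) 1 by simpa using hz)] with w hw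
    have hw1 : ‖w‖ < 1 := by simpa using hw
    have hk : Continuous fun t : ℝ => (1 - w * Complex.exp (-(t : ℂ) * Complex.I))⁻¹ :=
      (continuous_const.sub (continuous_const.mul hcE)).inv₀ (aux_ne hw1)
    unfold poissonInt
    have hconj : (starRingEnd ℂ) (1 / (2 * (π : ℂ)) * ∫ t in (0:ℝ)..(2 * π),
        (1 - w * Complex.exp (-(t : ℂ) * Complex.I))⁻¹ *
        ((starRingEnd ℂ) ∘ fun t : ℝ => F (Complex.exp ((t : ℂ) * Complex.I))) t) =
        1 / (2 * (π : ℂ)) * ∫ t in (0:ℝ)..(2 * π),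
        (starRingEnd ℂ) (1 - w * Complex.exp (-(t : ℂ) * Complex.I))⁻¹ *
        F (Complex.exp ((t : ℂ) * Complex.I)) := by
      rw [map_mul, ← intervalIntegral.intervalIntegral_conj]
      congr 1
      · simp [Complex.conj_ofNat]
      · congr 1; ext t; simp
    have c1 : Continuous fun t : ℝ => (1 - w * Complex.exp (-(t : ℂ) * Complex.I))⁻¹ *
        F (Complex.exp ((t : ℂ) * Complex.I)) := hk.mul hφ
    have c2 : Continuous fun t : ℝ =>
        (starRingEnd ℂ) (1 - w * Complex.exp (-(t : ℂ) * Complex.I))⁻¹ *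
        F (Complex.exp ((t : ℂ) * Complex.I)) := (Complex.continuous_conj.comp hk).mul hφ
    rw [hconj, ← mul_add, ← mul_sub, ← intervalIntegral.integral_add
      (c1.intervalIntegrable _ _) (c2.intervalIntegrable _ _),
      ← intervalIntegral.integral_sub ((c1.fun_add c2).intervalIntegrable _ _)
        (hφ.intervalIntegrable _ _)]
    congr 2; ext t
    rw [aux_P _ (aux_ne hw1 t)]; ring

lemma aux_jensen (μ : Measure ℝ) (p : ℝ) (hp : 1 ≤ p) (u k : ℝ → ℝ) (hu : ∀ t, 0 ≤ u t)
    (hk : ∀ t, 0 ≤ k t) (ik : Integrable k μ) (iuk : Integrable (fun t => u t * k t) μ)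
    (iupk : Integrable (fun t => u t ^ p * k t) μ) (A : ℝ) (hA : 0 < A) (hAk : ∫ t, k t ∂μ = A) :
    (∫ t, u t * k t ∂μ) ^ p ≤ A ^ p / A * ∫ t, u t ^ p * k t ∂μ := by
  have hI : 0 ≤ ∫ t, u t * k t ∂μ := integral_nonneg fun t => mul_nonneg (hu t) (hk t)
  have hJ : 0 ≤ ∫ t, u t ^ p * k t ∂μ :=
    integral_nonneg fun t => mul_nonneg (Real.rpow_nonneg (hu t) p) (hk t)
  set I := ∫ t, u t * k t ∂μ with hIdef
  rcases hI.eq_or_lt with h0 | h0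
  · rw [← h0, Real.zero_rpow (by linarith)]; positivity
  have hm : 0 < I / A := by positivity
  have key : ∫ t, ((I / A) ^ p * (1 - p) * k t + (I / A) ^ p * p / (I / A) * (u t * k t)) ∂μ
      ≤ ∫ t, u t ^ p * k t ∂μ := by
    refine integral_mono ((ik.const_mul _).add (iuk.const_mul _)) iupk fun t => ?_
    have hb := one_add_mul_self_le_rpow_one_add (s := u t / (I / A) - 1)
      (by have : 0 ≤ u t / (I / A) := div_nonneg (hu t) hm.le
          linarith) hp
    rw [add_sub_cancel, Real.div_rpow (hu t) hm.le, le_div_iff₀ (by positivity)] at hb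
    have := mul_le_mul_of_nonneg_right hb (hk t)
    refine le_trans (le_of_eq ?_) this
    ring
  rw [integral_add (ik.const_mul _) (iuk.const_mul _), integral_const_mul, integral_const_mul, hAk,
    ← hIdef] at key
  have e : (I / A) ^ p * (1 - p) * A + (I / A) ^ p * p / (I / A) * I = (I / A) ^ p * A := by
    field_simp
    ring
  rw [e, Real.div_rpow hI hA.le] at key
  have hAp : 0 < A ^ p := by positivity
  calc I ^ p = A ^ p / A * (I ^ p / A ^ p * A) := by field_simp
    _ ≤ _ := by gcongr
/-- For `p ∈ [1,∞)`, `F : 𝕋 → ℂ` absolutely continuous with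
`Ḟ ∈ L^p(𝕋)` and `f = P[F]`, for every `r ∈ (0,1)`,
`(1/2π) ∫₀^{2π} |f_z(re^{iθ})|^p dθ ≤ ‖Ḟ‖_{L^p}^p ((1/2π) ∫₀^{2π} dt/|1 - r e^{-it}|)^p`. -/
theorem stmt12 (p : ℝ) (hp : 1 ≤ p) (F : ℂ → ℂ) (Fd : ℝ → ℂ)
    (hF : IsACDeriv F Fd) (hLp : MemLpT (ENNReal.ofReal p) Fd) :
    ∀ r ∈ Ioo (0:ℝ) 1,
      (1 / (2 * π)) * ∫ θ in (0:ℝ)..(2 * π),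
          ‖wdz (poissonInt F) ((r : ℂ) * Complex.exp ((θ : ℂ) * Complex.I))‖ ^ p
        ≤ lpNormT p Fd ^ p *
            ((1 / (2 * π)) * ∫ t in (0:ℝ)..(2 * π),
                1 / ‖1 - (r : ℂ) * Complex.exp (-(t : ℂ) * Complex.I)‖) ^ p := by
  intro r hr
  obtain ⟨hr0, hr1⟩ := hr
  have hrn : ‖(r : ℂ)‖ < 1 := by
    rw [Complex.norm_real, Real.norm_of_nonneg hr0.le]; exact hr1
  have hT : (0:ℝ) ≤ 2 * π := by positivity
  have hT' : (0:ℝ) < 2 * π := by positivity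
  set k : ℝ → ℝ := fun t => 1 / ‖1 - (r : ℂ) * Complex.exp (-(t : ℂ) * Complex.I)‖ with hkdef
  have hkc : Continuous k :=
    continuous_const.div (by fun_prop) fun t => norm_ne_zero_iff.2 (aux_ne hrn t)
  have hkpos : ∀ t, 0 < k t := fun t =>
    div_pos one_pos (norm_pos_iff.2 (aux_ne hrn t))
  have hkb : ∀ t, ‖k t‖ ≤ 1 / (1 - ‖(r : ℂ)‖) := by
    intro t
    rw [Real.norm_of_nonneg (hkpos t).le]
    have : 0 < 1 - ‖(r : ℂ)‖ := by linarith
    exact one_div_le_one_div_of_le this (aux_lb _ _)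
  have hkper : Function.Periodic k (2 * π) := by
    intro t
    simp only [hkdef]
    congr 4
    rw [show -((t + 2 * π : ℝ) : ℂ) * Complex.I = -(t : ℂ) * Complex.I - 2 * π * Complex.I by
      push_cast; ring, Complex.exp_sub, Complex.exp_two_pi_mul_I, div_one]
  set A := ∫ t in (0:ℝ)..(2 * π), k t with hAdef
  have hApos : 0 < A := intervalIntegral.intervalIntegral_pos_of_pos
    (hkc.intervalIntegrable _ _) hkpos hT'
  have hA1 : ∀ θ : ℝ, ∫ t in (0:ℝ)..(2 * π), k (t - θ) = A := by
    intro θ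
    rw [intervalIntegral.integral_comp_sub_right]
    have := hkper.intervalIntegral_add_eq (0 - θ) 0
    rw [zero_add] at this
    rw [hAdef, ← this]; congr 1; ring
  have hA2 : ∀ t : ℝ, ∫ θ in (0:ℝ)..(2 * π), k (t - θ) = A := by
    intro t
    rw [intervalIntegral.integral_comp_sub_left]
    have := hkper.intervalIntegral_add_eq (t - 2 * π) 0
    rw [zero_add] at this
    rw [hAdef, ← this]; congr 1; ring
  clear_value k
  set μ : Measure ℝ := volume.restrict (Ioc (0:ℝ) (2 * π)) with hμ
  have hp0 : 0 ≤ p := by linarith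
  have iu : Integrable (fun t => ‖Fd t‖) μ :=
    ((intervalIntegrable_iff_integrableOn_Ioc_of_le hT).1 (hF.1 0 (2 * π))).norm
  have iup : Integrable (fun t => ‖Fd t‖ ^ p) μ := by
    have := MemLp.integrable_norm_rpow' hLp
    rwa [ENNReal.toReal_ofReal hp0] at this
  have hkc' : ∀ θ : ℝ, Continuous fun t => k (t - θ) := fun θ =>
    hkc.comp (continuous_id.sub continuous_const)
  have ik : ∀ θ : ℝ, Integrable (fun t => k (t - θ)) μ := fun θ =>
    (intervalIntegrable_iff_integrableOn_Ioc_of_le hT).1 ((hkc' θ).intervalIntegrable _ _)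
  have iuk : ∀ θ : ℝ, Integrable (fun t => ‖Fd t‖ * k (t - θ)) μ := fun θ =>
    iu.mul_bdd (hkc' θ).aestronglyMeasurable (Eventually.of_forall fun t => hkb _)
  have iupk : ∀ θ : ℝ, Integrable (fun t => ‖Fd t‖ ^ p * k (t - θ)) μ := fun θ =>
    iup.mul_bdd (hkc' θ).aestronglyMeasurable (Eventually.of_forall fun t => hkb _)
  have iprod : Integrable (Function.uncurry fun θ t : ℝ => ‖Fd t‖ ^ p * k (t - θ)) (μ.prod μ) := by
    have h1 : Integrable (fun q : ℝ × ℝ => (1:ℝ) * ‖Fd q.2‖ ^ p) (μ.prod μ) :=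
      (integrable_const (1:ℝ)).mul_prod iup
    simp only [one_mul] at h1
    have h2 : Continuous fun q : ℝ × ℝ => k (q.2 - q.1) :=
      hkc.comp (continuous_snd.sub continuous_fst)
    exact h1.mul_bdd h2.aestronglyMeasurable (Eventually.of_forall fun t => hkb _)
  set D : ℝ := (1 / (2 * π)) ^ p * (A ^ p / A) with hD
  have hD0 : 0 ≤ D := by positivity
  have hpt : ∀ θ : ℝ, ‖wdz (poissonInt F) ((r : ℂ) * Complex.exp ((θ : ℂ) * Complex.I))‖ ^ p
      ≤ D * ∫ t, ‖Fd t‖ ^ p * k (t - θ) ∂μ := by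
    intro θ
    have hz : ‖(r : ℂ) * Complex.exp ((θ : ℂ) * Complex.I)‖ < 1 := by
      rw [norm_mul, Complex.norm_exp_ofReal_mul_I, mul_one]; exact hrn
    have hle : ‖wdz (poissonInt F) ((r : ℂ) * Complex.exp ((θ : ℂ) * Complex.I))‖
        ≤ 1 / (2 * π) * ∫ t, ‖Fd t‖ * k (t - θ) ∂μ := by
      rw [aux_fz F Fd hF hz, norm_mul]
      have e1 : ‖(1 / (2 * (π : ℂ)))‖ = 1 / (2 * π) := by
        rw [show (1 / (2 * (π : ℂ))) = ((1 / (2 * π) : ℝ) : ℂ) by push_cast; rfl,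
          Complex.norm_real, Real.norm_of_nonneg (by positivity)]
      rw [e1]
      refine mul_le_mul_of_nonneg_left ?_ (by positivity)
      rw [intervalIntegral.integral_of_le hT]
      refine (norm_integral_le_integral_norm _).trans (le_of_eq ?_)
      refine integral_congr_ae (Eventually.of_forall fun t => ?_)
      simp only [norm_mul, norm_div, norm_neg, Complex.norm_I, one_mul, aux_norm_e, hkdef]
      rw [mul_comm]
      congr 4
      rw [mul_assoc, ← Complex.exp_add]
      congr 2
      push_cast; ring
    calc _ ≤ (1 / (2 * π) * ∫ t, ‖Fd t‖ * k (t - θ) ∂μ) ^ p :=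
          Real.rpow_le_rpow (norm_nonneg _) hle hp0
      _ = (1 / (2 * π)) ^ p * (∫ t, ‖Fd t‖ * k (t - θ) ∂μ) ^ p :=
          Real.mul_rpow (by positivity)
            (integral_nonneg fun t => mul_nonneg (norm_nonneg _) (hkpos _).le)
      _ ≤ (1 / (2 * π)) ^ p * (A ^ p / A * ∫ t, ‖Fd t‖ ^ p * k (t - θ) ∂μ) := by
          refine mul_le_mul_of_nonneg_left ?_ (by positivity)
          refine aux_jensen μ p hp _ _ (fun t => norm_nonneg _) (fun t => (hkpos _).le) (ik θ)
            (iuk θ) (iupk θ) A hApos ?_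
          rw [← hA1 θ, intervalIntegral.integral_of_le hT]
      _ = _ := by rw [hD]; ring
  have hmain : ∫ θ in (0:ℝ)..(2 * π),
      ‖wdz (poissonInt F) ((r : ℂ) * Complex.exp ((θ : ℂ) * Complex.I))‖ ^ p
      ≤ D * (A * ∫ t, ‖Fd t‖ ^ p ∂μ) := by
    rw [intervalIntegral.integral_of_le hT]
    calc _ ≤ ∫ θ, D * ∫ t, ‖Fd t‖ ^ p * k (t - θ) ∂μ ∂μ := by
          refine integral_mono_of_nonneg (Eventually.of_forall fun θ => ?_) ?_
            (Eventually.of_forall hpt)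
          · exact Real.rpow_nonneg (norm_nonneg _) p
          · exact iprod.integral_prod_left.const_mul D
      _ = D * ∫ t, ∫ θ, ‖Fd t‖ ^ p * k (t - θ) ∂μ ∂μ := by
          rw [integral_const_mul, integral_integral_swap iprod]
      _ = _ := by
          congr 1
          rw [← integral_const_mul]
          refine integral_congr_ae (Eventually.of_forall fun t => ?_)
          simp only
          rw [integral_const_mul, ← hA2 t, intervalIntegral.integral_of_le hT, mul_comm]
  have hJ : 0 ≤ ∫ t, ‖Fd t‖ ^ p ∂μ := integral_nonneg fun t => Real.rpow_nonneg (norm_nonneg _) p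
  have hlp : lpNormT p Fd ^ p = 1 / (2 * π) * ∫ t, ‖Fd t‖ ^ p ∂μ := by
    unfold lpNormT
    rw [intervalIntegral.integral_of_le hT, ← Real.rpow_mul (by positivity),
      one_div_mul_cancel (by linarith), Real.rpow_one]
  rw [hlp, Real.mul_rpow (by positivity) hApos.le]
  refine (mul_le_mul_of_nonneg_left hmain (by positivity)).trans (le_of_eq ?_)
  rw [hD]
  field_simp

end
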